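/- arXiv:2502.10128 — 2 statements merged into one kernel-verified Lean document; each statement's English description precedes it below -/
import Mathlib

section
/- For all n ≥ 1 and all k ≥ 0, the number of permutations π of length n avoiding the quasi-consecutive pattern 2̲1̲3 with des(π) = k equals the number of set partitions Π of {1,…,n} with blk(Π) = k + 1. -/
open scoped Classical

/-- The number of descents of a permutation of `Fin n` (one-line notation `π 0, π 1, …`). -/
def des {n : ℕ} (π : Equiv.Perm (Fin n)) : ℕ :=
  (Finset.univ.filter fun i : Fin n =>
    ∃ h : (i : ℕ) + 1 < n, π ⟨(i : ℕ) + 1, h⟩ < π i).card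

/-- `π` avoids the quasi-consecutive pattern 2̲1̲3: there are no (0-indexed) positions
`i` and `j` with `i + 2 ≤ j < n` such that `π_{i+1} < π_i < π_j`. -/
def AvoidsP {n : ℕ} (π : Equiv.Perm (Fin n)) : Prop :=
  ¬ ∃ (i j : ℕ) (hj : j < n) (hij : i + 2 ≤ j),
      π ⟨i + 1, by omega⟩ < π ⟨i, by omega⟩ ∧ π ⟨i, by omega⟩ < π ⟨j, hj⟩

/-!
Replace every letter of a word by the largest letter weakly to its right. The result is weakly
decreasing, and the word avoids 2̲1̲3 exactly when it increases along each run on which this suffix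
maximum is constant. Hence an avoiding permutation lists the blocks of a set partition by decreasing
maximum, each block in increasing order, and it is recovered from the partition by stably sorting
the letters by the maximum of their block. Its descents are the ends of the blocks other than the
last one.
-/

open Finset Order OrderDual

/-- `IsBlockMax f` says that `f` sends every element to the maximum of its block in some set
partition. Such maps encode set partitions: the blocks are the fibres, and their maxima are the
fixed points. -/
structure IsBlockMax {α : Type*} [LE α] (f : α → α) : Prop where
  le_apply (x : α) : x ≤ f x
  apply_apply (x : α) : f (f x) = f x

section SetPartition

lemma finpartition_ext_part {α : Type*} [DecidableEq α] {s : Finset α} {P Q : Finpartition s}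
    (h : ∀ x ∈ s, P.part x = Q.part x) : P = Q := by
  have mem_parts_iff (R : Finpartition s) (t : Finset α) :
      t ∈ R.parts ↔ ∃ x ∈ s, R.part x = t := by
    refine ⟨fun ht => R.part_surjOn ht, ?_⟩
    rintro ⟨x, hx, rfl⟩
    exact R.part_mem.2 hx
  ext t
  rw [mem_parts_iff, mem_parts_iff]
  exact exists_congr fun x => and_congr_right fun hx => by rw [h x hx]

variable {α : Type*} [Fintype α] [LinearOrder α]

/-- The largest element of the block of `x` in the set partition `P`. -/
def blockMax (P : Finpartition (univ : Finset α)) (x : α) : α :=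
  (P.part x).max' (P.part_nonempty.2 (mem_univ x))

lemma part_blockMax (P : Finpartition (univ : Finset α)) (x : α) :
    P.part (blockMax P x) = P.part x :=
  P.part_eq_of_mem (P.part_mem.2 (mem_univ x)) (max'_mem _ _)

lemma blockMax_eq_blockMax_iff (P : Finpartition (univ : Finset α)) {x y : α} :
    blockMax P x = blockMax P y ↔ P.part x = P.part y where
  mp h := by rw [← part_blockMax P x, h, part_blockMax]
  mpr h := by simp only [blockMax, h]

lemma isBlockMax_blockMax (P : Finpartition (univ : Finset α)) : IsBlockMax (blockMax P) where
  le_apply x := le_max' _ _ (P.mem_part (mem_univ x))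
  apply_apply x := (blockMax_eq_blockMax_iff P).2 (part_blockMax P x)

lemma card_fixed_blockMax (P : Finpartition (univ : Finset α)) :
    #{x | blockMax P x = x} = #P.parts := by
  refine card_nbij P.part (fun x _ => P.part_mem.2 (mem_univ x)) ?_ ?_
  · intro x hx y hy hxy
    simp only [coe_filter, mem_univ, true_and, Set.mem_ofPred_eq] at hx hy
    rw [← hx, ← hy, (blockMax_eq_blockMax_iff P).2 hxy]
  · intro t ht
    obtain ⟨x, -, rfl⟩ := P.part_surjOn ht
    exact ⟨blockMax P x, by simp [(isBlockMax_blockMax P).apply_apply], part_blockMax P x⟩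

lemma ofSetoid_ker_blockMax (P : Finpartition (univ : Finset α)) :
    Finpartition.ofSetoid (Setoid.ker (blockMax P)) = P := by
  refine finpartition_ext_part fun x _ => ?_
  ext y
  rw [Finpartition.mem_part_ofSetoid_iff_rel, Setoid.ker_def, blockMax_eq_blockMax_iff, eq_comm,
    P.mem_part_iff_part_eq_part (mem_univ y) (mem_univ x)]

lemma blockMax_ofSetoid_ker {f : α → α} (hf : IsBlockMax f) :
    blockMax (Finpartition.ofSetoid (Setoid.ker f)) = f := by
  funext x
  refine le_antisymm (max'_le _ _ _ fun y hy => ?_) (le_max' _ _ ?_)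
  · rw [Finpartition.mem_part_ofSetoid_iff_rel, Setoid.ker_def] at hy
    exact (hf.le_apply y).trans_eq hy.symm
  · rw [Finpartition.mem_part_ofSetoid_iff_rel, Setoid.ker_def, hf.apply_apply]

/-- A set partition corresponds to the map sending each element to the maximum of its block. -/
noncomputable def blockMaxEquiv : Finpartition (univ : Finset α) ≃ {f : α → α // IsBlockMax f} where
  toFun P := ⟨blockMax P, isBlockMax_blockMax P⟩
  invFun f := Finpartition.ofSetoid (Setoid.ker f.1)
  left_inv := ofSetoid_ker_blockMax
  right_inv f := Subtype.ext (blockMax_ofSetoid_ker f.2)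

end SetPartition

section SuffixMax

section Preorder

variable {ι α : Type*} [Preorder ι] [LocallyFiniteOrderTop ι] [LinearOrder α]

/-- The largest letter of the word `w` at or after position `i`. -/
def suffixMax (w : ι → α) (i : ι) : α :=
  (Ici i).sup' nonempty_Ici w

lemma suffixMax_le_iff {w : ι → α} {i : ι} {a : α} :
    suffixMax w i ≤ a ↔ ∀ j, i ≤ j → w j ≤ a := by
  simp only [suffixMax, sup'_le_iff, mem_Ici]

lemma le_suffixMax (w : ι → α) {i j : ι} (hij : i ≤ j) : w j ≤ suffixMax w i :=
  suffixMax_le_iff.1 le_rfl j hij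

lemma exists_eq_suffixMax (w : ι → α) (i : ι) : ∃ j, i ≤ j ∧ w j = suffixMax w i := by
  obtain ⟨j, hj, h⟩ := exists_mem_eq_sup' (nonempty_Ici (a := i)) w
  exact ⟨j, mem_Ici.1 hj, h.symm⟩

lemma suffixMax_antitone (w : ι → α) : Antitone (suffixMax w) := fun _ _ hij =>
  suffixMax_le_iff.2 fun _ hjk => le_suffixMax w (hij.trans hjk)

/-- The largest letter at or after the letter `x` in the word `π`. For an avoiding permutation
this is the map `blockMax` of the corresponding set partition. -/
def tailMax (π : ι ≃ α) (x : α) : α :=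
  suffixMax π (π.symm x)

lemma tailMax_apply (π : ι ≃ α) (i : ι) : tailMax π (π i) = suffixMax π i := by
  rw [tailMax, π.symm_apply_apply]

lemma isBlockMax_tailMax (π : ι ≃ α) : IsBlockMax (tailMax π) := by
  refine ⟨π.forall_congr_right.1 fun i => ?_, π.forall_congr_right.1 fun i => ?_⟩ <;>
    rw [tailMax_apply]
  · exact le_suffixMax π le_rfl
  · obtain ⟨j, hij, hj⟩ := exists_eq_suffixMax π i
    rw [← hj, tailMax_apply]
    exact le_antisymm ((suffixMax_antitone π hij).trans_eq hj.symm) (le_suffixMax π le_rfl)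

end Preorder

lemma tailMax_eq_of_antitone {ι α : Type*} [LinearOrder ι] [LocallyFiniteOrderTop ι]
    [LinearOrder α] (π : ι ≃ α) {f : α → α} (hf : IsBlockMax f) (hanti : Antitone (f ∘ π))
    (hfibre : ∀ i j, i < j → f (π i) = f (π j) → π i < π j) : tailMax π = f := by
  funext x
  obtain ⟨i, rfl⟩ := π.surjective x
  obtain ⟨m, hm⟩ := π.surjective (f (π i))
  have hfm : f (π m) = f (π i) := by rw [hm, hf.apply_apply]
  have him : i ≤ m := by
    by_contra! hmi
    exact (hfibre m i hmi hfm).not_ge (hm ▸ hf.le_apply (π i))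
  rw [tailMax_apply]
  refine le_antisymm (suffixMax_le_iff.2 fun j hij => ?_) (hm ▸ le_suffixMax π him)
  exact (hf.le_apply (π j)).trans (hanti hij)

section SuccOrder

variable {ι α : Type*} [PartialOrder ι] [LocallyFiniteOrderTop ι] [SuccOrder ι] [LinearOrder α]

lemma suffixMax_eq_max_succ (w : ι → α) (i : ι) :
    suffixMax w i = max (w i) (suffixMax w (succ i)) := by
  refine le_antisymm (suffixMax_le_iff.2 fun j hij => ?_)
    (max_le (le_suffixMax w le_rfl) (suffixMax_antitone w (le_succ i)))
  obtain rfl | hij := hij.eq_or_lt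
  · exact le_max_left _ _
  · exact le_max_of_le_right (le_suffixMax w (succ_le_of_lt hij))

/-- Every descent of the word `w` starts at a right-to-left maximum. This is avoidance of the
pattern 2̲1̲3 in a form that mentions only consecutive positions and `suffixMax`. At a maximal
position `succ i = i`, so that there is no descent. -/
def DescentTopsMaximal (w : ι → α) : Prop :=
  ∀ i, w (succ i) < w i → suffixMax w i = w i

lemma descentTopsMaximal_iff_strictMonoOn [IsSuccArchimedean ι] {w : ι → α}
    (hw : Function.Injective w) :
    DescentTopsMaximal w ↔ ∀ a, StrictMonoOn w (suffixMax w ⁻¹' {a}) := by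
  refine ⟨fun h a => ?_, fun h i hdesc => ?_⟩
  · refine strictMonoOn_of_lt_succ
      (Set.ordConnected_singleton.preimage_anti (suffixMax_antitone w)) fun i hi hia hsia => ?_
    by_contra! hle
    have hdesc : w (succ i) < w i := hle.lt_of_ne (hw.ne (lt_succ_of_not_isMax hi).ne')
    obtain ⟨j, hij, hj⟩ := exists_eq_suffixMax w (succ i)
    have hji : w j = w i := hj.trans ((hsia.trans hia.symm).trans (h i hdesc))
    exact (lt_succ_of_not_isMax hi).not_ge (hw hji ▸ hij)
  · by_contra hne
    have heq : suffixMax w i = suffixMax w (succ i) := by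
      rw [suffixMax_eq_max_succ w i] at hne ⊢
      exact (max_choice _ _).resolve_left hne
    have hlt : i < succ i := (le_succ i).lt_of_ne fun hi => hdesc.ne (congrArg w hi.symm)
    exact hdesc.not_gt (h _ heq rfl hlt)

lemma suffixMax_eq_self_iff {w : ι → α} (hw : Function.Injective w) (h : DescentTopsMaximal w)
    {i : ι} : suffixMax w i = w i ↔ IsMax i ∨ w (succ i) < w i := by
  refine ⟨fun hi => or_iff_not_imp_left.2 fun hmax => ?_, ?_⟩
  · exact ((le_suffixMax w (le_succ i)).trans_eq hi).lt_of_ne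
      (hw.ne (lt_succ_of_not_isMax hmax).ne')
  · rintro (hmax | hdesc)
    · exact le_antisymm (suffixMax_le_iff.2 fun j hij => (congrArg w (hmax.eq_of_ge hij)).le)
        (le_suffixMax w le_rfl)
    · exact h i hdesc

lemma card_suffixMax_eq_self [Fintype ι] [OrderTop ι] {w : ι → α} (hw : Function.Injective w)
    (h : DescentTopsMaximal w) :
    #{i | suffixMax w i = w i} = #{i | w (succ i) < w i} + 1 := by
  have hinsert : ({i | suffixMax w i = w i} : Finset ι) =
      insert ⊤ ({i | w (succ i) < w i} : Finset ι) := by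
    ext i
    simp only [mem_filter_univ, mem_insert, suffixMax_eq_self_iff hw h, isMax_iff_eq_top]
  rw [hinsert, card_insert_of_notMem (by simp)]

end SuccOrder

end SuffixMax

section Permutation

variable {n : ℕ}

lemma fin_succ_eq_mk (i : Fin n) (h : (i : ℕ) + 1 < n) : succ i = ⟨i + 1, h⟩ :=
  CovBy.succ_eq (Fin.covBy_iff.2 (Nat.covBy_iff_add_one_eq.2 rfl))

lemma exists_apply_add_one_lt_iff {α : Type*} [Preorder α] (w : Fin n → α) (i : Fin n) :
    (∃ h : (i : ℕ) + 1 < n, w ⟨i + 1, h⟩ < w i) ↔ w (succ i) < w i := by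
  refine ⟨fun ⟨h, hlt⟩ => by rwa [fin_succ_eq_mk i h], fun hlt => ?_⟩
  have h : (i : ℕ) + 1 < n := by
    by_contra! hi
    have hmax : IsMax i := fun j _ => Fin.le_def.2 (by lia)
    exact hlt.ne (congrArg w hmax.succ_eq)
  exact ⟨h, by rwa [← fin_succ_eq_mk i h]⟩

lemma des_eq_card_succ_lt (π : Equiv.Perm (Fin n)) : des π = #{i | π (succ i) < π i} :=
  congrArg card (filter_congr fun i _ => exists_apply_add_one_lt_iff π i)

lemma avoidsP_iff_descentTopsMaximal (π : Equiv.Perm (Fin n)) :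
    AvoidsP π ↔ DescentTopsMaximal π := by
  refine ⟨fun h i hdesc => ?_, ?_⟩
  · obtain ⟨j, hij, hj⟩ := exists_eq_suffixMax π i
    by_contra hne
    have hlt : π i < π j := hj ▸ (le_suffixMax π le_rfl).lt_of_ne' hne
    obtain ⟨hi, hdesc'⟩ := (exists_apply_add_one_lt_iff π i).2 hdesc
    have hij' : (i : ℕ) + 2 ≤ j := by
      have : i ≠ j := fun h => hlt.ne (congrArg π h)
      have : (⟨i + 1, hi⟩ : Fin n) ≠ j := fun h => (hdesc'.trans hlt).ne (congrArg π h)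
      grind
    exact h ⟨i, j, j.2, hij', hdesc', hlt⟩
  · rintro h ⟨i, j, hj, hij, hdesc, hlt⟩
    have hmax := h ⟨i, by lia⟩ ((exists_apply_add_one_lt_iff π _).1 ⟨by lia, hdesc⟩)
    have hle : π ⟨j, hj⟩ ≤ suffixMax π ⟨i, by lia⟩ :=
      le_suffixMax π (Fin.mk_le_mk.2 (by lia))
    exact (hle.trans_eq hmax).not_gt hlt

/-- `Tuple.sort` is stable, so on the right-hand side the blocks come in the order of decreasing
maxima and each block is increasing. -/
lemma avoidsP_iff_eq_sort (π : Equiv.Perm (Fin n)) :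
    AvoidsP π ↔ π = Tuple.sort (toDual ∘ tailMax π) := by
  have hmono : Monotone ((toDual ∘ tailMax π) ∘ π) := fun i j hij => by
    simpa only [Function.comp, tailMax_apply, toDual_le_toDual] using suffixMax_antitone π hij
  rw [avoidsP_iff_descentTopsMaximal, descentTopsMaximal_iff_strictMonoOn π.injective,
    Tuple.eq_sort_iff, and_iff_right hmono]
  simp only [Function.comp, tailMax_apply, toDual_inj]
  exact ⟨fun h i j hij heq => h _ heq rfl hij,
    fun h a i hi j hj hij => h i j hij (hi.trans hj.symm)⟩

lemma tailMax_sort {f : Fin n → Fin n} (hf : IsBlockMax f) :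
    tailMax (Tuple.sort (toDual ∘ f)) = f := by
  obtain ⟨hmono, hfibre⟩ := Tuple.eq_sort_iff.1 (Eq.refl (Tuple.sort (toDual ∘ f)))
  exact tailMax_eq_of_antitone _ hf hmono hfibre

/-- An avoiding permutation corresponds to the map `tailMax`, from which stable sorting recovers
it. -/
def avoidersEquivIsBlockMax :
    {π : Equiv.Perm (Fin n) // AvoidsP π} ≃ {f : Fin n → Fin n // IsBlockMax f} where
  toFun π := ⟨tailMax π.1, isBlockMax_tailMax π.1⟩
  invFun f := ⟨Tuple.sort (toDual ∘ f.1), (avoidsP_iff_eq_sort _).2 (by rw [tailMax_sort f.2])⟩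
  left_inv π := Subtype.ext ((avoidsP_iff_eq_sort π.1).1 π.2).symm
  right_inv f := Subtype.ext (tailMax_sort f.2)

lemma card_fixed_tailMax [NeZero n] {π : Equiv.Perm (Fin n)} (hπ : AvoidsP π) :
    #{x | tailMax π x = x} = des π + 1 := by
  rw [des_eq_card_succ_lt, ← card_suffixMax_eq_self π.injective
    ((avoidsP_iff_descentTopsMaximal π).1 hπ)]
  refine (card_equiv π fun i => ?_).symm
  simp only [mem_filter_univ, tailMax_apply]

/-- The set partition of an avoiding permutation: two letters are in the same block when the same
letter is the largest one at or after each of them. -/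
noncomputable def avoidersEquivFinpartition :
    {π : Equiv.Perm (Fin n) // AvoidsP π} ≃ Finpartition (univ : Finset (Fin n)) :=
  avoidersEquivIsBlockMax.trans blockMaxEquiv.symm

lemma card_parts_avoidersEquivFinpartition [NeZero n]
    (π : {π : Equiv.Perm (Fin n) // AvoidsP π}) :
    #(avoidersEquivFinpartition π).parts = des π.1 + 1 := by
  have hmax : blockMax (avoidersEquivFinpartition π) = tailMax π.1 :=
    blockMax_ofSetoid_ker (isBlockMax_tailMax π.1)
  rw [← card_fixed_blockMax, hmax, card_fixed_tailMax π.2]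

end Permutation

/-- For all `n ≥ 1` and `k ≥ 0`, the number of permutations of length `n` avoiding the
quasi-consecutive pattern 2̲1̲3 with `des(π) = k` equals the number of set partitions `Π`
of `{1,…,n}` with `blk(Π) = k + 1`. -/
theorem statement10 (n : ℕ) (hn : 1 ≤ n) (k : ℕ) :
    Nat.card {π : Equiv.Perm (Fin n) // AvoidsP π ∧ des π = k} =
      Nat.card {P : Finpartition (Finset.univ : Finset (Fin n)) //
        P.parts.card = k + 1} := by
  have : NeZero n := ⟨by lia⟩
  refine Nat.card_congr <| (Equiv.subtypeSubtypeEquivSubtypeInter _ _).symm.trans <|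
    avoidersEquivFinpartition.subtypeEquiv fun π => ?_
  rw [card_parts_avoidersEquivFinpartition, Nat.add_right_cancel_iff]
end

section
/- The quasi-consecutive patterns 2̲3̲1̲4 and 2̲4̲1̲3 are des-Wilf-equivalent: for all n ≥ 1 and k ≥ 0, the number of permutations of length n avoiding 2̲3̲1̲4 with exactly k descents equals the number of permutations of length n avoiding 2̲4̲1̲3 with exactly k descents. -/
/-!
Avoidance of either pattern and the descents of a permutation are visible in its Lehmer code `c`,
where `c i` counts the entries after position `i` that are smaller than the `i`-th one. Descents of
the permutation are descents of `c`, and its consecutive occurrences of `231` are the triples with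
`c (i + 2) < c i ≤ c (i + 1)`. For such a triple the middle value `c (i + 1)` lies between `c i` and
the largest value allowed at that place; avoiding `2̲3̲1̲4` says that it is always the largest
possible, avoiding `2̲4̲1̲3` that it is always the smallest possible. Two such triples never
interfere, so exchanging the two extreme values is a bijection between the two kinds of codes, and
it keeps every descent in place.
-/

open scoped Classical

/-- `π` avoids the quasi-consecutive pattern 2̲3̲1̲4: there are no (0-indexed) positions
`i` and `j` with `i + 3 ≤ j < n` such that π_{i+2} < π_i < π_{i+1} < π_j. -/
def AvoidsA {n : ℕ} (π : Equiv.Perm (Fin n)) : Prop :=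
  ¬ ∃ (i j : ℕ) (hj : j < n) (hij : i + 3 ≤ j), π ⟨i + 2, by omega⟩ < π ⟨i, by omega⟩ ∧ π ⟨i, by omega⟩ < π ⟨i + 1, by omega⟩ ∧ π ⟨i + 1, by omega⟩ < π ⟨j, hj⟩

/-- `π` avoids the quasi-consecutive pattern 2̲4̲1̲3: there are no (0-indexed) positions
`i` and `j` with `i + 3 ≤ j < n` such that π_{i+2} < π_i < π_j < π_{i+1}. -/
def AvoidsB {n : ℕ} (π : Equiv.Perm (Fin n)) : Prop :=
  ¬ ∃ (i j : ℕ) (hj : j < n) (hij : i + 3 ≤ j), π ⟨i + 2, by omega⟩ < π ⟨i, by omega⟩ ∧ π ⟨i, by omega⟩ < π ⟨j, hj⟩ ∧ π ⟨j, hj⟩ < π ⟨i + 1, by omega⟩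

open Finset Function

section ConsecutivePattern

variable {α : Type*} [LinearOrder α]

/-- The word `w` has an occurrence of the consecutive pattern `231` at positions `i, i + 1, i + 2`.
The second inequality is weak so that the notion can be shared by permutations and their Lehmer
codes, which may have repeated entries. -/
def Has231At (w : ℕ → α) (i : ℕ) : Prop := w (i + 2) < w i ∧ w i ≤ w (i + 1)

/-- The word obtained from `c` by setting the middle entry of each occurrence of `231`, say at
positions `i, i + 1, i + 2`, to `g i`. -/
noncomputable def replacePeaks (g c : ℕ → α) : ℕ → α
  | 0 => c 0
  | i + 1 => if Has231At c i then g i else c (i + 1)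

variable {g g' c b : ℕ → α} {i : ℕ}

lemma replacePeaks_succ_of_has231At (h : Has231At c i) : replacePeaks g c (i + 1) = g i :=
  if_pos h

lemma replacePeaks_succ_of_not_has231At (h : ¬ Has231At c i) :
    replacePeaks g c (i + 1) = c (i + 1) :=
  if_neg h

lemma replacePeaks_apply_of_le_succ (h : c i ≤ c (i + 1)) : replacePeaks g c i = c i := by
  cases i with
  | zero => rfl
  | succ i =>
    exact replacePeaks_succ_of_not_has231At fun hi => ((hi.2.trans h).trans_lt hi.1).false

lemma replacePeaks_eq_self (h : ∀ i, Has231At c i → c (i + 1) = g i) : replacePeaks g c = c := by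
  funext i
  cases i with
  | zero => rfl
  | succ i =>
    by_cases hi : Has231At c i
    · rw [replacePeaks_succ_of_has231At hi, h i hi]
    · exact replacePeaks_succ_of_not_has231At hi

lemma replacePeaks_le (hc : c ≤ b) (hg : ∀ i, Has231At c i → g i ≤ b (i + 1)) :
    replacePeaks g c ≤ b := by
  intro i
  cases i with
  | zero => exact hc 0
  | succ i =>
    by_cases hi : Has231At c i
    · exact (replacePeaks_succ_of_has231At hi).trans_le (hg i hi)
    · exact (replacePeaks_succ_of_not_has231At hi).trans_le (hc (i + 1))

lemma replacePeaks_succ_lt_iff (hg : ∀ i, Has231At c i → c i ≤ g i) :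
    replacePeaks g c (i + 1) < replacePeaks g c i ↔ c (i + 1) < c i := by
  by_cases hi : Has231At c i
  · rw [replacePeaks_succ_of_has231At hi, replacePeaks_apply_of_le_succ hi.2]
    exact iff_of_false (hg i hi).not_gt hi.2.not_gt
  · rw [replacePeaks_succ_of_not_has231At hi]
    cases i with
    | zero => rfl
    | succ i =>
      by_cases hi' : Has231At c i
      · rw [replacePeaks_succ_of_has231At hi']
        exact iff_of_true (hi'.1.trans_le (hg i hi')) (hi'.1.trans_le hi'.2)
      · rw [replacePeaks_succ_of_not_has231At hi']

lemma has231At_replacePeaks_iff (hg : ∀ i, Has231At c i → c i ≤ g i) :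
    Has231At (replacePeaks g c) i ↔ Has231At c i := by
  unfold Has231At
  rw [← not_lt, ← not_lt, replacePeaks_succ_lt_iff hg]
  refine and_congr_left fun hasc => ?_
  rw [not_lt] at hasc
  rw [replacePeaks_apply_of_le_succ hasc]
  by_cases hi : Has231At c (i + 1)
  · rw [replacePeaks_succ_of_has231At hi]
    exact iff_of_false (hasc.trans (hg (i + 1) hi)).not_gt (hasc.trans hi.2).not_gt
  · rw [replacePeaks_succ_of_not_has231At hi]

lemma replacePeaks_replacePeaks (hg : ∀ i, Has231At c i → c i ≤ g i) :
    replacePeaks g' (replacePeaks g c) = replacePeaks g' c := by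
  funext i
  cases i with
  | zero => rfl
  | succ i =>
    simp only [replacePeaks, has231At_replacePeaks_iff hg]
    split_ifs <;> rfl

end ConsecutivePattern

section Code

/-- The largest Lehmer code of a permutation of length `n`. By truncated subtraction it vanishes at
the positions `i ≥ n`, so `Set.Iic (staircase n)` is the set of all Lehmer codes of length `n`,
extended by zero. -/
def staircase (n i : ℕ) : ℕ := n - i - 1

/-- Restricting a word below the staircase to its first `n` entries, which determine it. -/
def iicStaircaseEquivPi (n : ℕ) : Set.Iic (staircase n) ≃ ((i : Fin n) → Fin (n - i)) where
  toFun c i := ⟨c.1 i, (Nat.le_sub_one_iff_lt (Nat.sub_pos_of_lt i.2)).1 (c.2 i)⟩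
  invFun f := ⟨fun i => if h : i < n then f ⟨i, h⟩ else 0, fun i => by
    dsimp only
    split_ifs with h
    · exact Nat.le_sub_one_of_lt (f ⟨i, h⟩).2
    · exact Nat.zero_le _⟩
  left_inv c := by
    refine Subtype.ext (funext fun i => ?_)
    dsimp only
    split_ifs with h
    · rfl
    · have := c.2 i
      simp only [staircase] at this
      omega
  right_inv f := by
    ext i
    simp

lemma natCard_Iic_staircase (n : ℕ) : Nat.card (Set.Iic (staircase n)) = n.factorial := by
  rw [Nat.card_congr (iicStaircaseEquivPi n), Nat.card_pi]
  simp only [Nat.card_fin]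
  rw [Fin.prod_univ_eq_prod_range (n - ·), ← Nat.descFactorial_eq_prod_range,
    Nat.descFactorial_self]

/-- The middle entry of every `231` of the code `c` is as large as possible. -/
def IsMaxAt231 (n : ℕ) (c : ℕ → ℕ) : Prop := ∀ i, Has231At c i → c (i + 1) = staircase n (i + 1)

/-- The middle entry of every `231` of the code `c` is as small as possible. -/
def IsMinAt231 (c : ℕ → ℕ) : Prop := ∀ i, Has231At c i → c (i + 1) = c i

variable {n : ℕ} {c : ℕ → ℕ}

lemma le_staircase_succ_of_has231At (hc : c ≤ staircase n) {i : ℕ} (h : Has231At c i) :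
    c i ≤ staircase n (i + 1) :=
  h.2.trans (hc (i + 1))

lemma isMaxAt231_replacePeaks (hc : c ≤ staircase n) :
    IsMaxAt231 n (replacePeaks (fun i => staircase n (i + 1)) c) := by
  intro i hi
  rw [has231At_replacePeaks_iff fun _ => le_staircase_succ_of_has231At hc] at hi
  exact replacePeaks_succ_of_has231At hi

lemma isMinAt231_replacePeaks (c : ℕ → ℕ) : IsMinAt231 (replacePeaks c c) := by
  intro i hi
  rw [has231At_replacePeaks_iff fun _ _ => le_rfl] at hi
  rw [replacePeaks_succ_of_has231At hi, replacePeaks_apply_of_le_succ hi.2]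

/-- The bijection that lowers the middle entry of every `231` of a code from its largest to its
smallest possible value. -/
noncomputable def lowerPeaksEquiv (n : ℕ) :
    {c : Set.Iic (staircase n) // IsMaxAt231 n c} ≃
      {c : Set.Iic (staircase n) // IsMinAt231 c} where
  toFun c := ⟨⟨replacePeaks c.1 c.1, replacePeaks_le c.1.2 fun _ =>
    le_staircase_succ_of_has231At c.1.2⟩, isMinAt231_replacePeaks _⟩
  invFun c := ⟨⟨replacePeaks (fun i => staircase n (i + 1)) c.1,
    replacePeaks_le c.1.2 fun _ _ => le_rfl⟩, isMaxAt231_replacePeaks c.1.2⟩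
  left_inv c := by
    refine Subtype.ext (Subtype.ext ?_)
    dsimp only
    rw [replacePeaks_replacePeaks fun _ _ => le_rfl, replacePeaks_eq_self c.2]
  right_inv c := by
    refine Subtype.ext (Subtype.ext ?_)
    dsimp only
    rw [replacePeaks_replacePeaks fun _ => le_staircase_succ_of_has231At c.1.2]
    exact replacePeaks_eq_self fun i hi => by rw [replacePeaks_apply_of_le_succ hi.2, c.2 i hi]

lemma lowerPeaksEquiv_succ_lt_iff (c : {c : Set.Iic (staircase n) // IsMaxAt231 n c}) (i : ℕ) :
    (lowerPeaksEquiv n c : ℕ → ℕ) (i + 1) < (lowerPeaksEquiv n c : ℕ → ℕ) i ↔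
      (c : ℕ → ℕ) (i + 1) < (c : ℕ → ℕ) i :=
  replacePeaks_succ_lt_iff fun _ _ => le_rfl

end Code

section LehmerCode

variable {α : Type*} [LinearOrder α]

/-- The Lehmer code of the word `w 0, …, w (n - 1)`, extended by zero. -/
def lehmerCode (n : ℕ) (w : ℕ → α) (i : ℕ) : ℕ := #{j ∈ Ioo i n | w j < w i}

variable {n i j : ℕ} {w : ℕ → α}

lemma lehmerCode_le_staircase (n : ℕ) (w : ℕ → α) : lehmerCode n w ≤ staircase n :=
  fun i => (card_filter_le _ _).trans_eq (Nat.card_Ioo i n)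

lemma lehmerCode_eq_staircase_iff :
    lehmerCode n w i = staircase n i ↔ ∀ j ∈ Ioo i n, w j < w i := by
  rw [lehmerCode, staircase, ← Nat.card_Ioo, card_filter_eq_iff]

lemma lehmerCode_lt_lehmerCode (hij : i < j) (hj : j < n) (h : w j < w i) :
    lehmerCode n w j < lehmerCode n w i := by
  refine card_lt_card ((ssubset_iff_of_subset fun l => ?_).2 ⟨j, ?_, ?_⟩)
  · simp only [mem_filter, mem_Ioo]
    exact fun ⟨⟨hjl, hl⟩, hlt⟩ => ⟨⟨hij.trans hjl, hl⟩, hlt.trans h⟩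
  · simp only [mem_filter, mem_Ioo]
    exact ⟨⟨hij, hj⟩, h⟩
  · simp

lemma lehmerCode_le_lehmerCode (hij : i ≤ j) (h : ∀ l ∈ Ioc i j, w i ≤ w l) :
    lehmerCode n w i ≤ lehmerCode n w j := by
  have hw : w i ≤ w j := hij.eq_or_lt.elim (fun e => e ▸ le_rfl)
    fun hlt => h j (right_mem_Ioc.2 hlt)
  refine card_le_card fun l => ?_
  simp only [mem_filter, mem_Ioo]
  intro ⟨⟨hil, hl⟩, hlt⟩
  have hjl : j < l := lt_of_not_ge fun hlj => (h l (mem_Ioc.2 ⟨hil, hlj⟩)).not_gt hlt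
  exact ⟨⟨hjl, hl⟩, hlt.trans_le hw⟩

lemma lehmerCode_succ_lt_iff :
    lehmerCode n w (i + 1) < lehmerCode n w i ↔ i + 1 < n ∧ w (i + 1) < w i := by
  refine ⟨fun h => ⟨?_, ?_⟩, fun h => lehmerCode_lt_lehmerCode i.lt_succ_self h.1 h.2⟩
  · have := lehmerCode_le_staircase n w i
    simp only [staircase] at this
    omega
  · contrapose! h
    exact lehmerCode_le_lehmerCode i.le_succ (by simpa using h)

lemma has231At_lehmerCode_iff : Has231At (lehmerCode n w) i ↔ i + 2 < n ∧ Has231At w i := by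
  unfold Has231At
  constructor
  · rintro ⟨hlt, hasc⟩
    have hn : i + 2 < n := by
      have := hasc.trans (lehmerCode_le_staircase n w (i + 1))
      simp only [staircase] at this
      omega
    have hw : w i ≤ w (i + 1) := by
      contrapose! hasc
      exact lehmerCode_succ_lt_iff.2 ⟨by omega, hasc⟩
    refine ⟨hn, ?_, hw⟩
    contrapose! hlt
    refine lehmerCode_le_lehmerCode (by omega) fun l hl => ?_
    obtain rfl | rfl : l = i + 1 ∨ l = i + 2 := by
      rw [mem_Ioc] at hl
      omega
    exacts [hw, hlt]
  · rintro ⟨hn, hlt, hw⟩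
    refine ⟨lehmerCode_lt_lehmerCode (by omega) hn hlt, ?_⟩
    exact not_lt.1 fun h => (lehmerCode_succ_lt_iff.1 h).2.not_ge hw

lemma lehmerCode_succ_eq_iff (h : w i ≤ w (i + 1)) :
    lehmerCode n w (i + 1) = lehmerCode n w i ↔
      ∀ j ∈ Ioo (i + 1) n, w j < w (i + 1) → w j < w i := by
  have hcode : lehmerCode n w i = #{j ∈ {j ∈ Ioo (i + 1) n | w j < w (i + 1)} | w j < w i} := by
    unfold lehmerCode
    congr 1
    ext j
    simp only [mem_filter, mem_Ioo, and_assoc]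
    constructor
    · rintro ⟨hij, hj, hlt⟩
      have hne : j ≠ i + 1 := fun e => (e ▸ hlt).not_ge h
      exact ⟨by omega, hj, hlt.trans_le h, hlt⟩
    · exact fun ⟨_, hj, _, hlt⟩ => ⟨by omega, hj, hlt⟩
  rw [hcode, lehmerCode, eq_comm, card_filter_eq_iff]
  simp only [mem_filter, and_imp]

end LehmerCode

section Permutation

lemma lehmerCode_eq_count {n i : ℕ} {w : Equiv.Perm ℕ} (hw : ∀ j, w j < n ↔ j < n) (hi : i < n) :
    lehmerCode n w i = Nat.count (fun v => ∀ j < i, w j ≠ v) (w i) := by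
  rw [lehmerCode, Nat.count_eq_card_filter_range, ← card_map w.toEmbedding]
  congr 1
  ext v
  obtain ⟨j, rfl⟩ := w.surjective v
  have hunused : (∀ l < i, w l ≠ w j) ↔ i ≤ j := by
    simp only [ne_eq, w.injective.eq_iff]
    exact ⟨fun h => not_lt.1 fun hji => h j hji rfl, fun h l hl => (hl.trans_le h).ne⟩
  have hlt (h : w j < w i) : j ≠ i ∧ j < n :=
    ⟨fun e => (e ▸ h).false, (hw j).1 (h.trans ((hw i).2 hi))⟩
  rw [← Equiv.coe_toEmbedding, mem_map', mem_filter, mem_filter, mem_Ioo, mem_range,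
    Equiv.coe_toEmbedding, hunused]
  constructor
  · exact fun ⟨⟨hij, _⟩, h⟩ => ⟨h, hij.le⟩
  · exact fun ⟨h, hij⟩ => ⟨⟨hij.lt_of_ne (hlt h).1.symm, (hlt h).2⟩, h⟩

lemma eq_of_lehmerCode_eq {n : ℕ} {u v : Equiv.Perm ℕ} (hu : ∀ j, u j < n ↔ j < n)
    (hv : ∀ j, v j < n ↔ j < n) (h : lehmerCode n u = lehmerCode n v) :
    ∀ i < n, u i = v i := by
  intro i
  induction i using Nat.strong_induction_on with
  | _ i ih =>
    intro hi
    have hcode := congrFun h i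
    rw [lehmerCode_eq_count hu hi, lehmerCode_eq_count hv hi] at hcode
    have hused : (fun a => ∀ j < i, u j ≠ a) = fun a => ∀ j < i, v j ≠ a := by
      funext a
      refine propext (forall₂_congr fun j hj => ?_)
      rw [ih j hj (hj.trans hi)]
    simp only [hused] at hcode
    refine Nat.count_injective ?_ ?_ hcode
    · exact (congrFun hused (u i)).mp fun j hj => u.injective.ne hj.ne
    · exact fun j hj => v.injective.ne hj.ne

variable {n : ℕ}

/-- The one-line notation of a permutation of `Fin n`, extended to `ℕ` by fixing all `i ≥ n`. -/
def oneLine (π : Equiv.Perm (Fin n)) : Equiv.Perm ℕ := π.extendDomain Fin.equivSubtype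

lemma oneLine_apply (π : Equiv.Perm (Fin n)) {i : ℕ} (hi : i < n) :
    oneLine π i = π ⟨i, hi⟩ :=
  π.extendDomain_apply_subtype Fin.equivSubtype hi

lemma oneLine_lt_iff (π : Equiv.Perm (Fin n)) (i : ℕ) : oneLine π i < n ↔ i < n := by
  by_cases hi : i < n
  · exact iff_of_true (oneLine_apply π hi ▸ Fin.is_lt _) hi
  · rw [oneLine, π.extendDomain_apply_not_subtype Fin.equivSubtype hi]

lemma lehmerCode_oneLine_injective :
    Injective fun π : Equiv.Perm (Fin n) => lehmerCode n (oneLine π) := by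
  intro π σ h
  ext i
  have := eq_of_lehmerCode_eq (oneLine_lt_iff π) (oneLine_lt_iff σ) h i i.2
  rwa [oneLine_apply, oneLine_apply] at this

/-- The Lehmer code as a bijection from permutations to the words bounded by the staircase. -/
noncomputable def lehmerEquiv (n : ℕ) : Equiv.Perm (Fin n) ≃ Set.Iic (staircase n) :=
  haveI : Finite (Set.Iic (staircase n)) := .of_equiv _ (iicStaircaseEquivPi n).symm
  .ofBijective (fun π => ⟨lehmerCode n (oneLine π), lehmerCode_le_staircase n _⟩) <|
    (Nat.bijective_iff_injective_and_card _).2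
      ⟨fun _ _ h => lehmerCode_oneLine_injective (congrArg Subtype.val h), by
        rw [Nat.card_perm, Nat.card_fin, natCard_Iic_staircase]⟩

lemma coe_lehmerEquiv (π : Equiv.Perm (Fin n)) :
    (lehmerEquiv n π : ℕ → ℕ) = lehmerCode n (oneLine π) :=
  rfl

lemma avoidsA_iff_forall_has231At (π : Equiv.Perm (Fin n)) :
    AvoidsA π ↔ ∀ i, i + 2 < n → Has231At (oneLine π) i →
      ∀ j ∈ Ioo (i + 1) n, oneLine π j < oneLine π (i + 1) := by
  simp only [AvoidsA, Fin.lt_def, ← oneLine_apply]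
  constructor
  · intro h i _ ⟨hlt, hle⟩ j hj
    rw [mem_Ioo] at hj
    by_contra! hge
    have hne : j ≠ i + 2 := fun e => ((e ▸ hge).trans_lt hlt).not_ge hle
    exact h ⟨i, j, hj.2, by omega, hlt, hle.lt_of_ne ((oneLine π).injective.ne (by omega)),
      hge.lt_of_ne ((oneLine π).injective.ne (by omega))⟩
  · rintro h ⟨i, j, hj, hij, hlt, hasc, hgt⟩
    exact (h i (by omega) ⟨hlt, hasc.le⟩ j (mem_Ioo.2 (by omega))).not_gt hgt

lemma avoidsB_iff_forall_has231At (π : Equiv.Perm (Fin n)) :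
    AvoidsB π ↔ ∀ i, i + 2 < n → Has231At (oneLine π) i →
      ∀ j ∈ Ioo (i + 1) n, oneLine π j < oneLine π (i + 1) → oneLine π j < oneLine π i := by
  simp only [AvoidsB, Fin.lt_def, ← oneLine_apply]
  constructor
  · intro h i _ ⟨hlt, _⟩ j hj hjlt
    rw [mem_Ioo] at hj
    by_contra! hge
    have hne : j ≠ i + 2 := fun e => (e ▸ hge).not_gt hlt
    exact h ⟨i, j, hj.2, by omega, hlt, hge.lt_of_ne ((oneLine π).injective.ne (by omega)), hjlt⟩
  · rintro h ⟨i, j, hj, hij, hlt, hgt, hjlt⟩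
    exact (h i (by omega) ⟨hlt, (hgt.trans hjlt).le⟩ j (mem_Ioo.2 (by omega)) hjlt).not_gt hgt

lemma avoidsA_iff_isMaxAt231 (π : Equiv.Perm (Fin n)) :
    AvoidsA π ↔ IsMaxAt231 n (lehmerEquiv n π) := by
  simp only [avoidsA_iff_forall_has231At, IsMaxAt231, coe_lehmerEquiv, has231At_lehmerCode_iff,
    lehmerCode_eq_staircase_iff, and_imp]

lemma avoidsB_iff_isMinAt231 (π : Equiv.Perm (Fin n)) :
    AvoidsB π ↔ IsMinAt231 (lehmerEquiv n π) := by
  simp only [avoidsB_iff_forall_has231At, IsMinAt231, coe_lehmerEquiv, has231At_lehmerCode_iff,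
    and_imp]
  exact forall₃_congr fun i _ h => (lehmerCode_succ_eq_iff h.2).symm

/-- The set of (0-indexed) descent positions of `π`, whose cardinality is `des π`. -/
noncomputable def descentSet (π : Equiv.Perm (Fin n)) : Finset (Fin n) :=
  {i | ∃ h : (i : ℕ) + 1 < n, π ⟨(i : ℕ) + 1, h⟩ < π i}

lemma des_eq_card_descentSet (π : Equiv.Perm (Fin n)) : des π = #(descentSet π) := rfl

lemma mem_descentSet_iff (π : Equiv.Perm (Fin n)) (i : Fin n) :
    i ∈ descentSet π ↔ (lehmerEquiv n π : ℕ → ℕ) (i + 1) < (lehmerEquiv n π : ℕ → ℕ) i := by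
  rw [coe_lehmerEquiv, descentSet, mem_filter_univ, lehmerCode_succ_lt_iff, ← exists_prop]
  refine exists_congr fun h => ?_
  rw [oneLine_apply π h, oneLine_apply π i.2, Fin.lt_def]

end Permutation

theorem statement14_general (n : ℕ) :
    ∃ Φ : {π : Equiv.Perm (Fin n) // AvoidsA π} ≃ {π : Equiv.Perm (Fin n) // AvoidsB π},
      ∀ π, descentSet (Φ π : Equiv.Perm (Fin n)) = descentSet (π : Equiv.Perm (Fin n)) := by
  let codeA : {π : Equiv.Perm (Fin n) // AvoidsA π} ≃
      {c : Set.Iic (staircase n) // IsMaxAt231 n c} :=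
    (lehmerEquiv n).subtypeEquiv avoidsA_iff_isMaxAt231
  let codeB : {π : Equiv.Perm (Fin n) // AvoidsB π} ≃
      {c : Set.Iic (staircase n) // IsMinAt231 c} :=
    (lehmerEquiv n).subtypeEquiv avoidsB_iff_isMinAt231
  refine ⟨codeA.trans ((lowerPeaksEquiv n).trans codeB.symm), fun π => ?_⟩
  have hcode : lehmerEquiv n (codeB.symm (lowerPeaksEquiv n (codeA π))).1 =
      (lowerPeaksEquiv n (codeA π)).1 :=
    congrArg Subtype.val (codeB.apply_symm_apply (lowerPeaksEquiv n (codeA π)))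
  ext i
  rw [mem_descentSet_iff, mem_descentSet_iff, Equiv.trans_apply, Equiv.trans_apply, hcode]
  exact lowerPeaksEquiv_succ_lt_iff (codeA π) i

/-- The quasi-consecutive patterns 2̲3̲1̲4 and 2̲4̲1̲3 are des-Wilf-equivalent. -/
theorem statement14 (n : ℕ) (hn : 1 ≤ n) (k : ℕ) :
    Nat.card {π : Equiv.Perm (Fin n) // AvoidsA π ∧ des π = k} =
      Nat.card {π : Equiv.Perm (Fin n) // AvoidsB π ∧ des π = k} := by
  obtain ⟨Φ, hΦ⟩ := statement14_general n
  exact Nat.card_congr <| (Equiv.subtypeSubtypeEquivSubtypeInter AvoidsA (des · = k)).symm.trans <|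
    (Φ.subtypeEquiv fun π => by rw [des_eq_card_descentSet, des_eq_card_descentSet, hΦ]).trans <|
    Equiv.subtypeSubtypeEquivSubtypeInter AvoidsB (des · = k)
end
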